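/- arXiv:2603.26215 — 5 statements merged into one kernel-verified Lean document; each statement's English description precedes it below -/
import Mathlib

section
/- Let (Ω, 𝒜) be a measurable space, let μ₁ and μ₂ be probability measures on Ω, and let ε ≥ 0 be a real number. If there exists a measurable function f : Ω → ℝ with f ≥ 0 pointwise, f integrable with respect to both μ₁ and μ₂, such that ∫ f dμ₁ > e^ε · ∫ f dμ₂, then there exists a measurable set A ⊆ Ω with (μ₁ A).toReal > e^ε · (μ₂ A).toReal, i.e. the ε-differential-privacy inequality is violated. -/
open MeasureTheory Real

lemma mul_toReal_lt_toReal_of_ofReal_mul_lt {c : ℝ} {a b : ENNReal} (hc : 0 ≤ c) (hb : b ≠ ⊤)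
    (h : ENNReal.ofReal c * a < b) : c * a.toReal < b.toReal := by
  simpa only [ENNReal.toReal_mul, ENNReal.toReal_ofReal hc] using ENNReal.toReal_strict_mono hb h

section

variable {Ω : Type*} [MeasurableSpace Ω] {μ ν : Measure Ω}

lemma ofReal_mul_lintegral_ofReal_lt_iff {c : ℝ} {f : Ω → ℝ} (hc : 0 ≤ c)
    (hfμ : Integrable f μ) (hfν : Integrable f ν) (hμ : 0 ≤ᵐ[μ] f) (hν : 0 ≤ᵐ[ν] f) :
    ENNReal.ofReal c * ∫⁻ x, ENNReal.ofReal (f x) ∂ν < ∫⁻ x, ENNReal.ofReal (f x) ∂μ ↔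
      c * ∫ x, f x ∂ν < ∫ x, f x ∂μ := by
  rw [← ofReal_integral_eq_lintegral_ofReal hfμ hμ, ← ofReal_integral_eq_lintegral_ofReal hfν hν,
    ← ENNReal.ofReal_mul hc,
    ENNReal.ofReal_lt_ofReal_iff_of_nonneg (mul_nonneg hc (integral_nonneg_of_ae hν))]

theorem expectation_mismatch_refutes_dp_general {c : ENNReal} {f : Ω → ENNReal}
    (hmismatch : c * ∫⁻ x, f x ∂ν < ∫⁻ x, f x ∂μ) :
    ∃ A : Set Ω, MeasurableSet A ∧ c * ν A < μ A := by
  by_contra! hdp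
  have hμν : μ ≤ c • ν := Measure.le_iff.2 hdp
  refine hmismatch.not_ge ?_
  calc ∫⁻ x, f x ∂μ ≤ ∫⁻ x, f x ∂(c • ν) := lintegral_mono' hμν le_rfl
    _ = c * ∫⁻ x, f x ∂ν := lintegral_smul_measure c f

end

theorem expectation_mismatch_refutes_dp
    {Ω : Type*} [MeasurableSpace Ω] (μ₁ μ₂ : Measure Ω)
    [IsProbabilityMeasure μ₁] [IsProbabilityMeasure μ₂] (ε : ℝ) (hε : 0 ≤ ε)
    (f : Ω → ℝ) (hf : Measurable f) (hf0 : ∀ x, 0 ≤ f x)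
    (hint₁ : Integrable f μ₁) (hint₂ : Integrable f μ₂)
    (hmismatch : ∫ x, f x ∂μ₁ > Real.exp ε * ∫ x, f x ∂μ₂) :
    ∃ A : Set Ω, MeasurableSet A ∧ (μ₁ A).toReal > Real.exp ε * (μ₂ A).toReal := by
  obtain ⟨A, hA, hlt⟩ := expectation_mismatch_refutes_dp_general <|
    (ofReal_mul_lintegral_ofReal_lt_iff (exp_nonneg ε) hint₁ hint₂ (.of_forall hf0)
      (.of_forall hf0)).2 hmismatch
  exact ⟨A, hA, mul_toReal_lt_toReal_of_ofReal_mul_lt (exp_nonneg ε) (measure_ne_top μ₁ A) hlt⟩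
end

section
/- Let (Ω, 𝒜) be a measurable space, let μ₁ and μ₂ be probability measures on Ω, let ε ≥ 0, and let f : Ω → ℝ be measurable, pointwise non-negative, and integrable with respect to both μ₁ and μ₂. Suppose real numbers L and U satisfy L ≤ ∫ f dμ₁, ∫ f dμ₂ ≤ U, and L > e^ε · U. Then there exists a measurable set A ⊆ Ω with (μ₁ A).toReal > e^ε · (μ₂ A).toReal. -/
open MeasureTheory Real

/-!
By the layer-cake formula `∫ f dμ = ∫₀^∞ μ {t < f} dt`, if every superlevel set of `f` satisfied
`μ₁ {t < f} ≤ c * μ₂ {t < f}`, the expectations would satisfy the same inequality. Hence a gap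
between the expectations is already witnessed by a threshold event `{t < f}`. Such events have
finite measure for `t > 0` because `f` is integrable.
-/

section

open scoped ENNReal

variable {Ω : Type*} [MeasurableSpace Ω] {μ₁ μ₂ : Measure Ω} {f : Ω → ℝ}

theorem lintegral_ofReal_le_mul_of_forall_measure_gt_le {c : ℝ≥0∞}
    (hf₁ : 0 ≤ᵐ[μ₁] f) (hf₂ : 0 ≤ᵐ[μ₂] f) (hm₁ : AEMeasurable f μ₁) (hm₂ : AEMeasurable f μ₂)
    (h : ∀ t > 0, μ₁ {x | t < f x} ≤ c * μ₂ {x | t < f x}) :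
    ∫⁻ x, ENNReal.ofReal (f x) ∂μ₁ ≤ c * ∫⁻ x, ENNReal.ofReal (f x) ∂μ₂ := by
  have tail_antitone : Antitone fun t : ℝ ↦ μ₂ {x | t < f x} :=
    fun _ _ hst ↦ measure_mono fun _ hx ↦ hst.trans_lt hx
  calc ∫⁻ x, ENNReal.ofReal (f x) ∂μ₁
      = ∫⁻ t in Set.Ioi 0, μ₁ {x | t < f x} := lintegral_eq_lintegral_meas_lt μ₁ hf₁ hm₁
    _ ≤ ∫⁻ t in Set.Ioi 0, c * μ₂ {x | t < f x} := setLIntegral_mono' measurableSet_Ioi h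
    _ = c * ∫⁻ t in Set.Ioi 0, μ₂ {x | t < f x} := lintegral_const_mul c tail_antitone.measurable
    _ = c * ∫⁻ x, ENNReal.ofReal (f x) ∂μ₂ := by rw [lintegral_eq_lintegral_meas_lt μ₂ hf₂ hm₂]

theorem integral_le_mul_of_forall_measureReal_gt_le {c : ℝ} (hc : 0 ≤ c)
    (hf₁ : 0 ≤ᵐ[μ₁] f) (hf₂ : 0 ≤ᵐ[μ₂] f) (hint₁ : Integrable f μ₁) (hint₂ : Integrable f μ₂)
    (h : ∀ t > 0, μ₁.real {x | t < f x} ≤ c * μ₂.real {x | t < f x}) :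
    ∫ x, f x ∂μ₁ ≤ c * ∫ x, f x ∂μ₂ := by
  have tail_le (t : ℝ) (ht : t > 0) :
      μ₁ {x | t < f x} ≤ ENNReal.ofReal c * μ₂ {x | t < f x} := by
    rw [← ofReal_measureReal (hint₁.measure_gt_lt_top ht).ne,
      ← ofReal_measureReal (hint₂.measure_gt_lt_top ht).ne, ← ENNReal.ofReal_mul hc]
    exact ENNReal.ofReal_le_ofReal (h t ht)
  have integral_nonneg₂ : 0 ≤ ∫ x, f x ∂μ₂ := integral_nonneg_of_ae hf₂
  rw [← ENNReal.ofReal_le_ofReal_iff (mul_nonneg hc integral_nonneg₂), ENNReal.ofReal_mul hc,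
    ofReal_integral_eq_lintegral_ofReal hint₁ hf₁, ofReal_integral_eq_lintegral_ofReal hint₂ hf₂]
  exact lintegral_ofReal_le_mul_of_forall_measure_gt_le hf₁ hf₂ hint₁.aemeasurable
    hint₂.aemeasurable tail_le

theorem expectation_bounds_witness_refutes_dp_general {c L U : ℝ} (hc : 0 ≤ c)
    (hf₁ : 0 ≤ᵐ[μ₁] f) (hf₂ : 0 ≤ᵐ[μ₂] f) (hint₁ : Integrable f μ₁) (hint₂ : Integrable f μ₂)
    (hL : L ≤ ∫ x, f x ∂μ₁) (hU : ∫ x, f x ∂μ₂ ≤ U) (hLU : c * U < L) :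
    ∃ t > 0, c * μ₂.real {x | t < f x} < μ₁.real {x | t < f x} := by
  by_contra! tail_le
  have : L ≤ c * U := calc
    L ≤ ∫ x, f x ∂μ₁ := hL
    _ ≤ c * ∫ x, f x ∂μ₂ :=
      integral_le_mul_of_forall_measureReal_gt_le hc hf₁ hf₂ hint₁ hint₂ tail_le
    _ ≤ c * U := mul_le_mul_of_nonneg_left hU hc
  exact this.not_gt hLU

end

theorem expectation_bounds_witness_refutes_dp
    {Ω : Type*} [MeasurableSpace Ω] (μ₁ μ₂ : Measure Ω)
    [IsProbabilityMeasure μ₁] [IsProbabilityMeasure μ₂] (ε : ℝ) (hε : 0 ≤ ε)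
    (f : Ω → ℝ) (hf : Measurable f) (hf0 : ∀ x, 0 ≤ f x)
    (hint₁ : Integrable f μ₁) (hint₂ : Integrable f μ₂)
    (L U : ℝ) (hL : L ≤ ∫ x, f x ∂μ₁) (hU : ∫ x, f x ∂μ₂ ≤ U)
    (hLU : L > Real.exp ε * U) :
    ∃ A : Set Ω, MeasurableSet A ∧ (μ₁ A).toReal > Real.exp ε * (μ₂ A).toReal := by
  obtain ⟨t, -, ht⟩ := expectation_bounds_witness_refutes_dp_general (exp_pos ε).le
    (ae_of_all _ hf0) (ae_of_all _ hf0) hint₁ hint₂ hL hU hLU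
  exact ⟨{x | t < f x}, measurableSet_lt measurable_const hf, ht⟩
end

section
/- There exist probability measures μ₁ and μ₂ on ℝ and an integrable function f : ℝ → ℝ such that μ₁(A) ≤ 3 · μ₂(A) holds for every measurable set A, and yet ∫ f dμ₁ > e^ε · ∫ f dμ₂ holds for every ε ≥ 0. Concretely, one may take μ₁ = (3/4)·δ₀ + (1/4)·δ₁, μ₂ = (1/4)·δ₀ + (3/4)·δ₁, and f(x) = −x + 1/4, for which ∫ f dμ₁ = 0 and ∫ f dμ₂ = −1/2. -/
open MeasureTheory Real

/-!
Scaling by `e^ε > 0` preserves the sign of an expectation, so an `f` of mean zero under `μ₁` and of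
negative mean under `μ₂` violates every inequality `𝔼_{μ₁}[f] ≤ e^ε 𝔼_{μ₂}[f]`. For laws on `{0, 1}`
the bound `μ₁ ≤ 3 μ₂` need only be checked at the two atoms.
-/

open ProbabilityTheory
open scoped NNReal unitInterval

section Bernoulli

variable {X : Type*} [MeasurableSpace X]

lemma bernoulliMeasure_eq_ofReal_smul_dirac_add (x y : X) (p : I) :
    Ber(x, y, p) =
      ENNReal.ofReal p • Measure.dirac x + ENNReal.ofReal (1 - p) • Measure.dirac y := by
  have ofReal_coe (q : I) : ENNReal.ofReal q = unitInterval.toNNReal q := by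
    rw [← unitInterval.coe_toNNReal, ENNReal.ofReal_coe_nnreal]
  rw [← unitInterval.coe_symm_eq, ofReal_coe, ofReal_coe]
  rfl

lemma bernoulliMeasure_le_smul (x y : X) {p q : I} {c : ℝ≥0}
    (hx : (p : ℝ) ≤ c * q) (hy : 1 - (p : ℝ) ≤ c * (1 - q)) :
    Ber(x, y, p) ≤ c • Ber(x, y, q) := by
  have mass_x : unitInterval.toNNReal p ≤ c * unitInterval.toNNReal q := hx
  have mass_y : unitInterval.toNNReal (σ p) ≤ c * unitInterval.toNNReal (σ q) := hy
  rw [bernoulliMeasure_def, bernoulliMeasure_def, smul_add, smul_smul, smul_smul]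
  gcongr

end Bernoulli

lemma integral_neg_add_const_bernoulliMeasure_zero_one (p : I) (a : ℝ) :
    ∫ x, (-x + a) ∂Ber((0 : ℝ), 1, p) = p - 1 + a := by
  rw [integral_bernoulliMeasure, smul_eq_mul, smul_eq_mul]
  ring

theorem nonnegativity_necessary_for_soundness :
    ∃ (μ₁ μ₂ : Measure ℝ) (f : ℝ → ℝ),
      IsProbabilityMeasure μ₁ ∧ IsProbabilityMeasure μ₂ ∧
      Integrable f μ₁ ∧ Integrable f μ₂ ∧
      (∀ A : Set ℝ, MeasurableSet A → μ₁ A ≤ 3 * μ₂ A) ∧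
      (∀ ε : ℝ, 0 ≤ ε → ∫ x, f x ∂μ₁ > Real.exp ε * ∫ x, f x ∂μ₂) ∧
      μ₁ = (ENNReal.ofReal (3/4)) • Measure.dirac (0 : ℝ)
            + (ENNReal.ofReal (1/4)) • Measure.dirac (1 : ℝ) ∧
      μ₂ = (ENNReal.ofReal (1/4)) • Measure.dirac (0 : ℝ)
            + (ENNReal.ofReal (3/4)) • Measure.dirac (1 : ℝ) ∧
      f = (fun x => -x + 1/4) ∧
      (∫ x, f x ∂μ₁ = 0) ∧ (∫ x, f x ∂μ₂ = -(1/2)) := by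
  let p₁ : I := ⟨3/4, by norm_num, by norm_num⟩
  let p₂ : I := ⟨1/4, by norm_num, by norm_num⟩
  have le_three_smul : Ber((0 : ℝ), 1, p₁) ≤ (3 : ℝ≥0) • Ber((0 : ℝ), 1, p₂) :=
    bernoulliMeasure_le_smul 0 1 (by norm_num [p₁, p₂]) (by norm_num [p₁, p₂])
  have integral₁ : ∫ x, (-x + 1/4) ∂Ber((0 : ℝ), 1, p₁) = 0 := by
    rw [integral_neg_add_const_bernoulliMeasure_zero_one]
    norm_num [p₁]
  have integral₂ : ∫ x, (-x + 1/4) ∂Ber((0 : ℝ), 1, p₂) = -(1/2) := by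
    rw [integral_neg_add_const_bernoulliMeasure_zero_one]
    norm_num [p₂]
  refine ⟨Ber(0, 1, p₁), Ber(0, 1, p₂), fun x => -x + 1/4, inferInstance, inferInstance,
    integrable_bernoulliMeasure .., integrable_bernoulliMeasure .., fun A _ => le_three_smul A,
    fun ε _ => ?_, ?_, ?_, rfl, integral₁, integral₂⟩
  · rw [integral₁, integral₂]
    exact mul_neg_of_pos_of_neg (exp_pos ε) (by norm_num)
  · rw [bernoulliMeasure_eq_ofReal_smul_dirac_add]
    norm_num [p₁]
  · rw [bernoulliMeasure_eq_ofReal_smul_dirac_add]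
    norm_num [p₂]
end

section
/- Let μ_q be the Laplace measure centered at q (Lebesgue measure with density x ↦ (1/2)·exp(−|x − q|)), and let f(y) = 2·y² + (9848/25)·y⁴. Then ∫ f dμ_{3/2} = 552316/25 (= 22092.64), ∫ f dμ_{5/2} = 1360052/25 (= 54402.08), and ∫ f dμ_{5/2} > (246/100) · ∫ f dμ_{3/2}; consequently, for every real ε with 0 ≤ ε < ln(2.46), one has ∫ f dμ_{5/2} > e^ε · ∫ f dμ_{3/2}. -/
open MeasureTheory Real

noncomputable def laplaceMeasure (q : ℝ) : Measure ℝ :=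
  volume.withDensity (fun x => ENNReal.ofReal ((1/2) * Real.exp (-|x - q|)))

/-!
Centering at `q` turns the integral against the Laplace measure into one against the even weight
`exp (-|z|) / 2`. Folding the line at the origin, the centered moments become Gamma integrals: the
`n`-th one is `n!` for even `n` and vanishes for odd `n`. Expanding `y ^ n = ((y - q) + q) ^ n`
then gives the raw moments, in particular `q ^ 2 + 2` and `q ^ 4 + 12 * q ^ 2 + 24`, which
determine both expectations of the witness.
-/

section Folding

variable {E : Type*} [NormedAddCommGroup E] {f : ℝ → E}

theorem integrable_of_integrableOn_Ioi_of_comp_neg (hf : IntegrableOn f (Set.Ioi 0))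
    (hf_neg : IntegrableOn (fun x => f (-x)) (Set.Ioi 0)) : Integrable f := by
  have hf_Iic : IntegrableOn f (Set.Iic 0) := by
    rw [integrableOn_Iic_iff_integrableOn_Iio]
    rw [← neg_zero] at hf_neg
    simpa only [neg_neg] using hf_neg.comp_neg_Iio
  rw [← integrableOn_univ, ← Set.Iic_union_Ioi (a := (0 : ℝ))]
  exact hf_Iic.union hf

theorem integral_eq_setIntegral_Ioi_add_comp_neg [NormedSpace ℝ E] (hf : Integrable f) :
    ∫ x, f x = ∫ x in Set.Ioi 0, (f x + f (-x)) := by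
  have integral_Iic : ∫ x in Set.Iic 0, f x = ∫ x in Set.Ioi 0, f (-x) := by
    rw [integral_comp_neg_Ioi, neg_zero]
  rw [integral_add hf.integrableOn hf.comp_neg.integrableOn, ← integral_Iic, add_comm,
    intervalIntegral.integral_Iic_add_Ioi hf.integrableOn hf.integrableOn]

end Folding

theorem integrableOn_pow_mul_exp_neg_Ioi (n : ℕ) :
    IntegrableOn (fun z : ℝ => z ^ n * exp (-z)) (Set.Ioi 0) := by
  simpa [mul_comm] using GammaIntegral_convergent (s := n + 1) (by positivity)

theorem setIntegral_pow_mul_exp_neg_Ioi (n : ℕ) :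
    ∫ z in Set.Ioi (0 : ℝ), z ^ n * exp (-z) = n.factorial := by
  have gamma_eq := Gamma_eq_integral (s := n + 1) (by positivity)
  simpa [mul_comm, Gamma_nat_eq_factorial] using gamma_eq.symm

theorem integrable_pow_mul_exp_neg_abs (n : ℕ) :
    Integrable (fun z : ℝ => z ^ n * exp (-|z|)) := by
  have integrableOn_Ioi := integrableOn_pow_mul_exp_neg_Ioi n
  refine integrable_of_integrableOn_Ioi_of_comp_neg
    (integrableOn_Ioi.congr_fun (fun z hz => ?_) measurableSet_Ioi)
    (IntegrableOn.congr_fun (integrableOn_Ioi.const_mul ((-1) ^ n)) (fun z hz => ?_)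
      measurableSet_Ioi)
  · simp only [abs_of_pos hz.out]
  · simp only [abs_neg, abs_of_pos hz.out, neg_pow z, mul_assoc]

theorem integral_pow_mul_exp_neg_abs (n : ℕ) :
    ∫ z : ℝ, z ^ n * exp (-|z|) = (1 + (-1) ^ n) * n.factorial := by
  have fold_eq : ∀ z ∈ Set.Ioi (0 : ℝ), z ^ n * exp (-|z|) + (-z) ^ n * exp (-|(-z)|) =
      (1 + (-1) ^ n) * (z ^ n * exp (-z)) := by
    intro z hz
    rw [abs_neg, abs_of_pos hz.out, neg_pow z]
    ring
  rw [integral_eq_setIntegral_Ioi_add_comp_neg (integrable_pow_mul_exp_neg_abs n),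
    setIntegral_congr_fun measurableSet_Ioi fold_eq, integral_const_mul,
    setIntegral_pow_mul_exp_neg_Ioi]

section ChangeOfVariables

variable {E : Type*} [NormedAddCommGroup E] [NormedSpace ℝ E]

theorem integrable_laplaceMeasure_iff (q : ℝ) {g : ℝ → E} :
    Integrable g (laplaceMeasure q) ↔ Integrable (fun z => exp (-|z|) • g (z + q)) := by
  rw [laplaceMeasure, integrable_withDensity_iff_integrable_smul' (by fun_prop)
      (.of_forall fun _ => ENNReal.ofReal_lt_top),
    ← (measurePreserving_add_right volume q).integrable_comp_emb
      (measurableEmbedding_addRight q)]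
  simp (disch := positivity) only [Function.comp_def, add_sub_cancel_right,
    ENNReal.toReal_ofReal, mul_smul]
  exact integrable_smul_iff (by norm_num) _

theorem integral_laplaceMeasure (q : ℝ) (g : ℝ → E) :
    ∫ y, g y ∂(laplaceMeasure q) = (1 / 2 : ℝ) • ∫ z, exp (-|z|) • g (z + q) := by
  rw [laplaceMeasure, integral_withDensity_eq_integral_toReal_smul (by fun_prop)
      (.of_forall fun _ => ENNReal.ofReal_lt_top),
    ← integral_add_right_eq_self _ q]
  simp (disch := positivity) only [add_sub_cancel_right, ENNReal.toReal_ofReal, mul_smul,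
    integral_smul]

end ChangeOfVariables

theorem integrable_sub_pow_laplaceMeasure (q : ℝ) (n : ℕ) :
    Integrable (fun y => (y - q) ^ n) (laplaceMeasure q) := by
  simpa only [integrable_laplaceMeasure_iff, add_sub_cancel_right, smul_eq_mul, mul_comm]
    using integrable_pow_mul_exp_neg_abs n

theorem integral_sub_pow_laplaceMeasure (q : ℝ) (n : ℕ) :
    ∫ y, (y - q) ^ n ∂(laplaceMeasure q) = (1 + (-1) ^ n) / 2 * n.factorial := by
  simp only [integral_laplaceMeasure, add_sub_cancel_right, smul_eq_mul, mul_comm (exp _),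
    integral_pow_mul_exp_neg_abs]
  ring

theorem pow_eq_sum_sub_pow {R : Type*} [CommRing R] (q y : R) (n : ℕ) :
    y ^ n = ∑ k ∈ Finset.range (n + 1), (y - q) ^ k * q ^ (n - k) * n.choose k := by
  rw [← add_pow, sub_add_cancel]

theorem integrable_pow_laplaceMeasure (q : ℝ) (n : ℕ) :
    Integrable (fun y => y ^ n) (laplaceMeasure q) := by
  simp only [pow_eq_sum_sub_pow q _ n]
  exact integrable_finsetSum _ fun k _ =>
    ((integrable_sub_pow_laplaceMeasure q k).mul_const _).mul_const _

theorem integral_pow_laplaceMeasure (q : ℝ) (n : ℕ) :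
    ∫ y, y ^ n ∂(laplaceMeasure q) = ∑ k ∈ Finset.range (n + 1),
      (1 + (-1) ^ k) / 2 * k.factorial * q ^ (n - k) * n.choose k := by
  simp only [pow_eq_sum_sub_pow q _ n]
  rw [integral_finsetSum _ fun k _ =>
    ((integrable_sub_pow_laplaceMeasure q k).mul_const _).mul_const _]
  simp only [integral_mul_const, integral_sub_pow_laplaceMeasure]

theorem integral_sq_laplaceMeasure (q : ℝ) : ∫ y, y ^ 2 ∂(laplaceMeasure q) = q ^ 2 + 2 := by
  rw [integral_pow_laplaceMeasure]
  norm_num [Finset.sum_range_succ, Nat.factorial, Nat.choose]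

theorem integral_pow_four_laplaceMeasure (q : ℝ) :
    ∫ y, y ^ 4 ∂(laplaceMeasure q) = q ^ 4 + 12 * q ^ 2 + 24 := by
  rw [integral_pow_laplaceMeasure]
  norm_num [Finset.sum_range_succ, Nat.factorial, Nat.choose]
  ring

theorem integral_mul_sq_add_mul_pow_four_laplaceMeasure (a b q : ℝ) :
    ∫ y, (a * y ^ 2 + b * y ^ 4) ∂(laplaceMeasure q) =
      a * (q ^ 2 + 2) + b * (q ^ 4 + 12 * q ^ 2 + 24) := by
  rw [integral_add ((integrable_pow_laplaceMeasure q 2).const_mul a)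
      ((integrable_pow_laplaceMeasure q 4).const_mul b),
    integral_const_mul, integral_const_mul, integral_sq_laplaceMeasure,
    integral_pow_four_laplaceMeasure]

theorem histogram_expectation_mismatch_witness :
    let f : ℝ → ℝ := fun y => 2*y^2 + (9848/25)*y^4
    (∫ y, f y ∂(laplaceMeasure (3/2)) = 552316/25) ∧
      (∫ y, f y ∂(laplaceMeasure (5/2)) = 1360052/25) ∧
      (∫ y, f y ∂(laplaceMeasure (5/2)) > (246/100) * ∫ y, f y ∂(laplaceMeasure (3/2))) ∧
      ∀ ε : ℝ, 0 ≤ ε → ε < Real.log (246/100) →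
        ∫ y, f y ∂(laplaceMeasure (5/2)) > Real.exp ε * ∫ y, f y ∂(laplaceMeasure (3/2)) := by
  intro f
  have expectation_left : ∫ y, f y ∂(laplaceMeasure (3/2)) = 552316/25 := by
    rw [integral_mul_sq_add_mul_pow_four_laplaceMeasure]
    norm_num
  have expectation_right : ∫ y, f y ∂(laplaceMeasure (5/2)) = 1360052/25 := by
    rw [integral_mul_sq_add_mul_pow_four_laplaceMeasure]
    norm_num
  rw [expectation_left, expectation_right]
  refine ⟨rfl, rfl, by norm_num, fun ε _ hε => ?_⟩
  have exp_lt : exp ε < 246/100 := (lt_log_iff_exp_lt (by norm_num)).mp hε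
  linarith
end

section
/- Let N_q denote the Gaussian probability measure on ℝ with mean q and variance 1 (Mathlib's gaussianReal q 1). Then for every real ε ≥ 0 there exists a measurable set A ⊆ ℝ such that N_1(A) > e^ε · N_0(A). Hence the Gaussian mechanism q ↦ N_q is not ε-differentially private for any ε ≥ 0 under the similarity relation |q₁ − q₂| ≤ 1. -/
open MeasureTheory ProbabilityTheory Real

/-!
The likelihood ratio of two Gaussians with the same variance is the exponential of an affine
function, the privacy loss, which is nonconstant as soon as the means differ. Hence it exceeds
`exp ε` on an open half-line. This half-line has positive mass, and integrating the likelihood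
ratio over it violates the `ε`-differential-privacy inequality.
-/

open scoped NNReal ENNReal

theorem mul_measure_lt_withDensity_superlevel {α : Type*} [MeasurableSpace α] {μ : Measure α}
    {f : α → ℝ≥0∞} (hf : Measurable f) {c : ℝ≥0∞} (h_ne_zero : μ {x | c < f x} ≠ 0)
    (h_ne_top : μ {x | c < f x} ≠ ∞) :
    c * μ {x | c < f x} < μ.withDensity f {x | c < f x} := by
  have h_meas : MeasurableSet {x | c < f x} := measurableSet_lt measurable_const hf
  obtain ⟨x, hx⟩ : {x | c < f x}.Nonempty := nonempty_of_measure_ne_zero h_ne_zero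
  rw [withDensity_apply f h_meas, ← setLIntegral_const]
  refine setLIntegral_strict_mono h_meas h_ne_zero hf ?_ (ae_of_all _ fun _ hy ↦ hy)
  rw [setLIntegral_const]
  exact ENNReal.mul_ne_top (ne_top_of_lt hx) h_ne_top

theorem isOpenPosMeasure_gaussianReal (m : ℝ) {v : ℝ≥0} (hv : v ≠ 0) :
    (gaussianReal m v).IsOpenPosMeasure :=
  (gaussianReal_absolutelyContinuous' m hv).isOpenPosMeasure

/-- The privacy loss of the Gaussian mechanism with noise variance `v`: the log-likelihood ratio at
the output `x` of the input `m₂` against the input `m₁`, in closed form. It is meaningful only for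
`v ≠ 0`. -/
noncomputable def gaussianPrivacyLoss (m₁ m₂ : ℝ) (v : ℝ≥0) (x : ℝ) : ℝ :=
  (m₂ - m₁) * (x - (m₁ + m₂) / 2) / v

section gaussianPrivacyLoss

variable (m₁ m₂ : ℝ) (v : ℝ≥0)

theorem continuous_gaussianPrivacyLoss : Continuous (gaussianPrivacyLoss m₁ m₂ v) := by
  unfold gaussianPrivacyLoss
  fun_prop

variable {m₁ m₂ v} in
theorem surjective_gaussianPrivacyLoss (hm : m₁ ≠ m₂) (hv : v ≠ 0) :
    Function.Surjective (gaussianPrivacyLoss m₁ m₂ v) := by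
  intro t
  have hm' : m₂ - m₁ ≠ 0 := sub_ne_zero.mpr hm.symm
  refine ⟨(m₁ + m₂) / 2 + t * v / (m₂ - m₁), ?_⟩
  rw [gaussianPrivacyLoss, add_sub_cancel_left]
  field_simp

theorem gaussianPDFReal_mul_exp_gaussianPrivacyLoss (x : ℝ) :
    gaussianPDFReal m₁ v x * exp (gaussianPrivacyLoss m₁ m₂ v x) = gaussianPDFReal m₂ v x := by
  simp only [gaussianPDFReal, gaussianPrivacyLoss]
  rw [mul_assoc, ← exp_add]
  ring_nf

variable {v} in
theorem gaussianReal_withDensity_exp_gaussianPrivacyLoss (hv : v ≠ 0) :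
    (gaussianReal m₁ v).withDensity (fun x ↦ ENNReal.ofReal (exp (gaussianPrivacyLoss m₁ m₂ v x))) =
      gaussianReal m₂ v := by
  have h_meas := (continuous_gaussianPrivacyLoss m₁ m₂ v).measurable.exp.ennreal_ofReal
  rw [gaussianReal_of_var_ne_zero m₁ hv, gaussianReal_of_var_ne_zero m₂ hv,
    ← withDensity_mul volume (measurable_gaussianPDF m₁ v) h_meas]
  congr 1 with x
  rw [Pi.mul_apply, gaussianPDF, gaussianPDF, ← ENNReal.ofReal_mul (gaussianPDFReal_nonneg m₁ v x),
    gaussianPDFReal_mul_exp_gaussianPrivacyLoss]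

variable {m₁ m₂ v} in
theorem gaussianReal_lt_gaussianPrivacyLoss_ne_zero (m : ℝ) (hm : m₁ ≠ m₂) (hv : v ≠ 0) (t : ℝ) :
    gaussianReal m v {x | t < gaussianPrivacyLoss m₁ m₂ v x} ≠ 0 := by
  have := isOpenPosMeasure_gaussianReal m hv
  have h_open : IsOpen {x | t < gaussianPrivacyLoss m₁ m₂ v x} :=
    isOpen_lt continuous_const (continuous_gaussianPrivacyLoss m₁ m₂ v)
  obtain ⟨x, hx⟩ := surjective_gaussianPrivacyLoss hm hv (t + 1)
  exact h_open.measure_ne_zero _ ⟨x, (lt_add_one t).trans_eq hx.symm⟩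

end gaussianPrivacyLoss

theorem exp_mul_gaussianReal_lt_gaussianReal {m₁ m₂ : ℝ} (hm : m₁ ≠ m₂) {v : ℝ≥0} (hv : v ≠ 0)
    (ε : ℝ) :
    ENNReal.ofReal (exp ε) * gaussianReal m₁ v {x | ε < gaussianPrivacyLoss m₁ m₂ v x} <
      gaussianReal m₂ v {x | ε < gaussianPrivacyLoss m₁ m₂ v x} := by
  have h_superlevel : {x | ε < gaussianPrivacyLoss m₁ m₂ v x} =
      {x | ENNReal.ofReal (exp ε) < ENNReal.ofReal (exp (gaussianPrivacyLoss m₁ m₂ v x))} := by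
    simp only [ENNReal.ofReal_lt_ofReal_iff (exp_pos _), exp_lt_exp]
  have h_ne_zero := gaussianReal_lt_gaussianPrivacyLoss_ne_zero m₁ hm hv ε
  rw [← gaussianReal_withDensity_exp_gaussianPrivacyLoss m₁ m₂ hv]
  rw [h_superlevel] at h_ne_zero ⊢
  exact mul_measure_lt_withDensity_superlevel
    (continuous_gaussianPrivacyLoss m₁ m₂ v).measurable.exp.ennreal_ofReal h_ne_zero
    (measure_ne_top _ _)

theorem gaussian_mechanism_not_eps_DP_general {m₁ m₂ : ℝ} (hm : m₁ ≠ m₂) (v : ℝ≥0) (ε : ℝ) :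
    ∃ A : Set ℝ, MeasurableSet A ∧
      gaussianReal m₂ v A > ENNReal.ofReal (exp ε) * gaussianReal m₁ v A := by
  rcases eq_or_ne v 0 with rfl | hv
  · -- Without noise the outputs are Dirac masses at distinct points.
    exact ⟨{m₂}, measurableSet_singleton m₂, by simp [hm]⟩
  · exact ⟨{x | ε < gaussianPrivacyLoss m₁ m₂ v x},
      measurableSet_lt measurable_const (continuous_gaussianPrivacyLoss m₁ m₂ v).measurable,
      exp_mul_gaussianReal_lt_gaussianReal hm hv ε⟩

theorem gaussian_mechanism_not_eps_DP :
    ∀ ε : ℝ, 0 ≤ ε →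
      ∃ A : Set ℝ, MeasurableSet A ∧
        gaussianReal 1 1 A > ENNReal.ofReal (Real.exp ε) * gaussianReal 0 1 A :=
  fun ε _ ↦ gaussian_mechanism_not_eps_DP_general zero_ne_one 1 ε
end
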